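/- Let 4 ≤ p < q and n = p + q. Then S_i(D_{p,q}^{0,1}) = S_i(B_{p,q}^{0,2}) for i = 0, 1, 2, 3 and S_4(D_{p,q}^{0,1}) − S_4(B_{p,q}^{0,2}) = 4(2p − q − 3). Consequently: if 2p > q + 3 then B_{p,q}^{0,2} ≺_s D_{p,q}^{0,1}; if 2p < q + 3 then D_{p,q}^{0,1} ≺_s B_{p,q}^{0,2}; and if 2p = q + 3 then S_i(D_{p,q}^{0,1}) = S_i(B_{p,q}^{0,2}) for i = 0, 1, …, 5 while S_6(B_{p,q}^{0,2}) − S_6(D_{p,q}^{0,1}) = 3((q − 2)² − 1) > 0, so again D_{p,q}^{0,1} ≺_s B_{p,q}^{0,2}. -/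

import Mathlib

open SimpleGraph

open scoped Classical in
/-- The adjacency matrix of a simple graph, with real entries. -/
noncomputable def adjMat {V : Type*} [Fintype V] (G : SimpleGraph V) : Matrix V V ℝ :=
  Matrix.of fun a b => if G.Adj a b then 1 else 0

/-- The `k`-th spectral moment `S_k(G) = tr(A(G)^k)`. -/
noncomputable def spectralMoment {V : Type*} [Fintype V] [DecidableEq V]
    (G : SimpleGraph V) (k : ℕ) : ℝ :=
  Matrix.trace (adjMat G ^ k)

/-- `SLt G₁ G₂` means `G₁ ≺_s G₂`: for some `k` with `1 ≤ k ≤ n - 1`,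
`S_i(G₁) = S_i(G₂)` for all `i < k` and `S_k(G₁) < S_k(G₂)`. -/
def SLt {V : Type*} [Fintype V] [DecidableEq V] (G₁ G₂ : SimpleGraph V) : Prop :=
  ∃ k : ℕ, 1 ≤ k ∧ k ≤ Fintype.card V - 1 ∧
    (∀ i < k, spectralMoment G₁ i = spectralMoment G₂ i) ∧
    spectralMoment G₁ k < spectralMoment G₂ k

/-- The tree `B_{p,q}^{k,l}` on `p + q` vertices: vertex `0 = u` is adjacent to `1 = v`
and to the `q - 1` vertices `2, …, q`; the distinguished neighbor `2` of `u` carries the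
`k` pendant leaves `q+1, …, q+k`; the `l` neighbors `3, …, l+2` of `u` carry one pendant
leaf each (`q+k+j` is attached to `j+2` for `1 ≤ j ≤ l`); and `v` carries the
`p - k - l - 1` pendant leaves `q+k+l+1, …, p+q-1`. -/
def BTree (p q k l : ℕ) : SimpleGraph (Fin (p + q)) :=
  SimpleGraph.fromRel (fun a b =>
    (a.val = 0 ∧ b.val = 1) ∨
    (a.val = 0 ∧ 2 ≤ b.val ∧ b.val ≤ q) ∨
    (a.val = 2 ∧ q + 1 ≤ b.val ∧ b.val ≤ q + k) ∨
    (q + k + 1 ≤ b.val ∧ b.val ≤ q + k + l ∧ a.val = b.val - (q + k) + 2) ∨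
    (a.val = 1 ∧ q + k + l + 1 ≤ b.val))

/-- The tree `D_{p,q}^{k,l}` on `p + q` vertices: vertex `1 = v` is adjacent to `0 = u`
and to the `p - 1` vertices `2, …, p`; the distinguished neighbor `2` of `v` carries the
`k` pendant leaves `p+1, …, p+k`; the `l` neighbors `3, …, l+2` of `v` carry one pendant
leaf each; and `u` carries the `q - k - l - 1` pendant leaves `p+k+l+1, …, p+q-1`. -/
def DTree (p q k l : ℕ) : SimpleGraph (Fin (p + q)) :=
  SimpleGraph.fromRel (fun a b =>
    (a.val = 0 ∧ b.val = 1) ∨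
    (a.val = 1 ∧ 2 ≤ b.val ∧ b.val ≤ p) ∨
    (a.val = 2 ∧ p + 1 ≤ b.val ∧ b.val ≤ p + k) ∨
    (p + k + 1 ≤ b.val ∧ b.val ≤ p + k + l ∧ a.val = b.val - (p + k) + 2) ∨
    (a.val = 0 ∧ p + k + l + 1 ≤ b.val))

/-- `T ∈ 𝒯_{p+q}^{p,q}`: `T` is a tree on `p + q` vertices with a `(p,q)`-bipartition. -/
def TreeBip (p q : ℕ) (G : SimpleGraph (Fin (p + q))) : Prop :=
  G.IsTree ∧ ∃ A : Finset (Fin (p + q)), A.card = p ∧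
    ∀ ⦃x y : Fin (p + q)⦄, G.Adj x y → (x ∈ A ↔ y ∉ A)

/-!
Let `r` be a vertex of a forest all of whose edges join a neighbor of `r` to a non-neighbor of `r`.
Ordering the neighbors of `r` first makes the adjacency matrix block off-diagonal, so its odd
moments vanish and its even ones are `2 * tr (M ^ k)`, where `M` is the block of `A ^ 2` on the
neighbors of `r`. Two of these have only `r` as a common neighbor, so `M` is the all-ones matrix
plus `diagonal (deg x - 1)`, and the moments depend only on `deg r` and on the power sums of the
numbers `deg x - 1`. This applies to `B_{p,q}^{k,l}` at `u`, and `D_{p,q}^{k,l}` is isomorphic to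
`B_{q,p}^{k,l}`.
-/

open Matrix

section Trace

variable {m n R : Type*} [Fintype m] [Fintype n]

theorem trace_fromBlocks [AddCommMonoid R] (A : Matrix m m R) (B : Matrix m n R) (C : Matrix n m R)
    (D : Matrix n n R) : trace (fromBlocks A B C D) = trace A + trace D := by
  simp [trace]

variable [DecidableEq m] [DecidableEq n]

section Semiring

variable [Semiring R]

theorem trace_reindex_pow (e : m ≃ n) (A : Matrix m m R) (k : ℕ) :
    trace (reindex e e A ^ k) = trace (A ^ k) := by
  rw [← coe_reindexRingEquiv R e, ← map_pow, coe_reindexRingEquiv]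
  exact e.symm.sum_comp (A ^ k).diag

theorem fromBlocks_zero_diag_pow_even (B : Matrix m n R) (C : Matrix n m R) (k : ℕ) :
    fromBlocks 0 B C 0 ^ (2 * k) = fromBlocks ((B * C) ^ k) 0 0 ((C * B) ^ k) := by
  simp [pow_mul, sq, fromBlocks_multiply, fromBlocks_diagonal_pow]

theorem trace_fromBlocks_zero_diag_pow_odd (B : Matrix m n R) (C : Matrix n m R) (k : ℕ) :
    trace (fromBlocks 0 B C 0 ^ (2 * k + 1)) = 0 := by
  rw [pow_succ, fromBlocks_zero_diag_pow_even, fromBlocks_multiply, trace_fromBlocks]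
  simp

theorem trace_diagonal_mul_vecMulVec (d u v : n → R) :
    trace (diagonal d * vecMulVec u v) = ∑ i, d i * (u i * v i) := by
  simp only [trace, diag_apply, diagonal_mul, vecMulVec_apply]

end Semiring

variable [CommSemiring R]

theorem trace_mul_pow_succ_comm (B : Matrix m n R) (C : Matrix n m R) (k : ℕ) :
    trace ((B * C) ^ (k + 1)) = trace ((C * B) ^ (k + 1)) := by
  have mul_mul_pow (k : ℕ) : C * (B * C) ^ k = (C * B) ^ k * C := by
    induction k with
    | zero => simp
    | succ k ih => rw [pow_succ, ← Matrix.mul_assoc, ih, pow_succ]; simp only [Matrix.mul_assoc]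
  rw [pow_succ', Matrix.mul_assoc, trace_mul_comm, mul_mul_pow, Matrix.mul_assoc, ← pow_succ]

theorem trace_fromBlocks_zero_diag_pow_even (B : Matrix m n R) (C : Matrix n m R) (k : ℕ) :
    trace (fromBlocks 0 B C 0 ^ (2 * (k + 1))) = 2 * trace ((B * C) ^ (k + 1)) := by
  rw [fromBlocks_zero_diag_pow_even, trace_fromBlocks, ← trace_mul_pow_succ_comm, two_mul]

theorem trace_add_sq (A B : Matrix n n R) :
    trace ((A + B) ^ 2) = trace (A ^ 2) + 2 * trace (A * B) + trace (B ^ 2) := by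
  simp only [sq, add_mul, mul_add, trace_add, trace_mul_comm B A]
  ring

theorem trace_add_cube (A B : Matrix n n R) :
    trace ((A + B) ^ 3) =
      trace (A ^ 3) + 3 * trace (A ^ 2 * B) + 3 * trace (A * B ^ 2) + trace (B ^ 3) := by
  have aba : trace (A * B * A) = trace (A * A * B) := trace_mul_cycle A B A
  have baa : trace (B * A * A) = trace (A * A * B) := (trace_mul_cycle A A B).symm
  have bab : trace (B * A * B) = trace (A * B * B) := (trace_mul_cycle A B B).symm
  have bba : trace (B * B * A) = trace (A * B * B) := trace_mul_cycle B B A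
  simp only [pow_succ, pow_zero, one_mul, add_mul, mul_add, trace_add, aba, baa, bab, bba,
    ← Matrix.mul_assoc]
  ring

theorem vecMulVec_pow_succ (u v : n → R) (k : ℕ) :
    vecMulVec u v ^ (k + 1) = (v ⬝ᵥ u) ^ k • vecMulVec u v := by
  induction k with
  | zero => simp
  | succ k ih =>
    rw [pow_succ, ih, smul_mul_assoc, vecMulVec_mul_vecMulVec, vecMulVec_smul, smul_smul, pow_succ]

theorem trace_diagonal_add_ones_sq (d : n → R) :
    trace ((diagonal d + vecMulVec 1 1) ^ 2) =
      (Fintype.card n : R) ^ 2 + 2 * ∑ i, d i + ∑ i, d i ^ 2 := by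
  rw [trace_add_sq, trace_diagonal_mul_vecMulVec, vecMulVec_pow_succ, trace_smul, trace_vecMulVec,
    diagonal_pow, trace_diagonal]
  simp only [Pi.pow_apply, Pi.one_apply, mul_one, one_dotProduct_one, smul_eq_mul]
  ring

theorem trace_diagonal_add_ones_cube (d : n → R) :
    trace ((diagonal d + vecMulVec 1 1) ^ 3) =
      (Fintype.card n : R) ^ 3 + 3 * (Fintype.card n * ∑ i, d i) + 3 * ∑ i, d i ^ 2
        + ∑ i, d i ^ 3 := by
  rw [trace_add_cube, vecMulVec_pow_succ, vecMulVec_pow_succ, mul_smul_comm, trace_smul,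
    trace_smul, diagonal_pow, diagonal_pow, trace_diagonal_mul_vecMulVec,
    trace_diagonal_mul_vecMulVec, trace_vecMulVec, trace_diagonal]
  simp only [Pi.pow_apply, Pi.one_apply, mul_one, one_dotProduct_one, smul_eq_mul]
  ring

end Trace

section Moments

variable {V W : Type*} [Fintype V] [Fintype W] {G : SimpleGraph V} {H : SimpleGraph W}

theorem adjMat_eq_adjMatrix (G : SimpleGraph V) [DecidableRel G.Adj] :
    adjMat G = G.adjMatrix ℝ := by
  ext x y
  simp [adjMat, adjMatrix_apply]

theorem adjMat_toBlock_eq_zero {s t : Set V} (h : G.IsBipartiteWith s t) :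
    (adjMat G).toBlock (· ∈ s) (· ∈ s) = 0 := by
  ext x y
  exact if_neg fun hxy => Set.disjoint_left.1 h.disjoint y.2 (h.mem_of_mem_adj x.2 hxy)

theorem adjMat_toBlock_compl_eq_zero {s : Set V} (h : G.IsBipartiteWith s sᶜ) :
    (adjMat G).toBlock (· ∉ s) (· ∉ s) = 0 :=
  adjMat_toBlock_eq_zero h.symm

theorem reindex_adjMat_eq_fromBlocks {s : Set V} [DecidablePred (· ∈ s)]
    (h : G.IsBipartiteWith s sᶜ) :
    reindex (Equiv.sumCompl (· ∈ s)).symm (Equiv.sumCompl (· ∈ s)).symm (adjMat G) =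
      fromBlocks 0 ((adjMat G).toBlock (· ∈ s) (· ∉ s))
        ((adjMat G).toBlock (· ∉ s) (· ∈ s)) 0 := by
  rw [← adjMat_toBlock_eq_zero h, ← adjMat_toBlock_compl_eq_zero h]
  ext (x | x) (y | y) <;> rfl

variable [DecidableEq V] [DecidableEq W]

theorem spectralMoment_zero (G : SimpleGraph V) : spectralMoment G 0 = Fintype.card V := by
  rw [spectralMoment, pow_zero, trace_one]

theorem spectralMoment_eq_of_iso (e : G ≃g H) (k : ℕ) :
    spectralMoment G k = spectralMoment H k := by
  classical
  rw [spectralMoment, spectralMoment, adjMat_eq_adjMatrix, adjMat_eq_adjMatrix,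
    ← e.reindex_adjMatrix ℝ, trace_reindex_pow]

theorem spectralMoment_odd_of_isBipartiteWith {s : Set V} (h : G.IsBipartiteWith s sᶜ) (k : ℕ) :
    spectralMoment G (2 * k + 1) = 0 := by
  classical
  rw [spectralMoment, ← trace_reindex_pow (Equiv.sumCompl (· ∈ s)).symm,
    reindex_adjMat_eq_fromBlocks h, trace_fromBlocks_zero_diag_pow_odd]

theorem spectralMoment_even_of_isBipartiteWith {s : Set V} [DecidablePred (· ∈ s)]
    (h : G.IsBipartiteWith s sᶜ) (k : ℕ) :
    spectralMoment G (2 * (k + 1)) =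
      2 * trace ((adjMat G ^ 2).toBlock (· ∈ s) (· ∈ s) ^ (k + 1)) := by
  rw [spectralMoment, ← trace_reindex_pow (Equiv.sumCompl (· ∈ s)).symm,
    reindex_adjMat_eq_fromBlocks h, trace_fromBlocks_zero_diag_pow_even, sq,
    toBlock_mul_eq_add _ (· ∈ s), adjMat_toBlock_eq_zero h, zero_mul, zero_add]

theorem adjMat_sq_apply (G : SimpleGraph V) [DecidableRel G.Adj] (x y : V) :
    (adjMat G ^ 2) x y = (G.neighborFinset x ∩ G.neighborFinset y).card := by
  simp only [adjMat_eq_adjMatrix, sq, adjMatrix_mul_apply, adjMatrix_apply, Finset.sum_boole]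
  congr 2
  ext z
  simp [G.adj_comm z]

end Moments

section HeightTwo

variable {V : Type*} {G : SimpleGraph V} {r : V}

/-- The non-isolated vertices of `G` form a tree in which every vertex is at distance at most two
from the root `r`: every edge joins a neighbor of `r` to a non-neighbor of `r`, and two distinct
neighbors of `r` have no common neighbor besides `r`. -/
structure IsHeightTwoRoot (G : SimpleGraph V) (r : V) : Prop where
  isBipartiteWith : G.IsBipartiteWith (G.neighborSet r) (G.neighborSet r)ᶜ
  eq_root_of_adj_of_adj ⦃x y z : V⦄ : G.Adj r x → G.Adj r y → x ≠ y → G.Adj x z → G.Adj y z → z = r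

variable [Fintype V]

theorem sum_neighborSet [DecidableRel G.Adj] {M : Type*} [AddCommMonoid M] (f : V → M) :
    ∑ x : G.neighborSet r, f x = ∑ x ∈ G.neighborFinset r, f x :=
  Finset.sum_set_coe _

namespace IsHeightTwoRoot

variable [DecidableEq V] [DecidableRel G.Adj]

theorem neighborFinset_inter_neighborFinset (h : IsHeightTwoRoot G r) {x y : V}
    (hx : G.Adj r x) (hy : G.Adj r y) (hxy : x ≠ y) :
    G.neighborFinset x ∩ G.neighborFinset y = {r} := by
  ext z
  simp only [Finset.mem_inter, mem_neighborFinset, Finset.mem_singleton]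
  refine ⟨fun ⟨hxz, hyz⟩ => h.eq_root_of_adj_of_adj hx hy hxy hxz hyz, ?_⟩
  rintro rfl
  exact ⟨hx.symm, hy.symm⟩

theorem adjMat_sq_toBlock (h : IsHeightTwoRoot G r) :
    (adjMat G ^ 2).toBlock (· ∈ G.neighborSet r) (· ∈ G.neighborSet r) =
      diagonal (fun x : G.neighborSet r => (G.degree x : ℝ) - 1)
        + vecMulVec (1 : G.neighborSet r → ℝ) 1 := by
  ext x y
  obtain rfl | hxy := eq_or_ne x y
  · simp [adjMat_sq_apply]
  · rw [toBlock_apply, adjMat_sq_apply,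
      h.neighborFinset_inter_neighborFinset x.2 y.2 (Subtype.coe_ne_coe.2 hxy)]
    simp [diagonal_apply_ne _ hxy]

theorem spectralMoment_even (h : IsHeightTwoRoot G r) (k : ℕ) :
    spectralMoment G (2 * (k + 1)) =
      2 * trace ((diagonal (fun x : G.neighborSet r => (G.degree x : ℝ) - 1)
        + vecMulVec (1 : G.neighborSet r → ℝ) 1) ^ (k + 1)) := by
  rw [spectralMoment_even_of_isBipartiteWith h.isBipartiteWith, h.adjMat_sq_toBlock]

theorem spectralMoment_two (h : IsHeightTwoRoot G r) :
    spectralMoment G 2 =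
      2 * (G.degree r + ∑ x ∈ G.neighborFinset r, ((G.degree x : ℝ) - 1)) := by
  rw [h.spectralMoment_even 0, zero_add, pow_one, trace_add, trace_diagonal, trace_vecMulVec,
    one_dotProduct_one, card_neighborSet_eq_degree, add_comm,
    sum_neighborSet fun x => (G.degree x : ℝ) - 1]

theorem spectralMoment_four (h : IsHeightTwoRoot G r) :
    spectralMoment G 4 =
      2 * ((G.degree r : ℝ) ^ 2 + 2 * ∑ x ∈ G.neighborFinset r, ((G.degree x : ℝ) - 1)
        + ∑ x ∈ G.neighborFinset r, ((G.degree x : ℝ) - 1) ^ 2) := by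
  rw [h.spectralMoment_even 1, trace_diagonal_add_ones_sq, card_neighborSet_eq_degree,
    sum_neighborSet fun x => (G.degree x : ℝ) - 1,
    sum_neighborSet fun x => ((G.degree x : ℝ) - 1) ^ 2]

theorem spectralMoment_six (h : IsHeightTwoRoot G r) :
    spectralMoment G 6 =
      2 * ((G.degree r : ℝ) ^ 3
        + 3 * (G.degree r * ∑ x ∈ G.neighborFinset r, ((G.degree x : ℝ) - 1))
        + 3 * ∑ x ∈ G.neighborFinset r, ((G.degree x : ℝ) - 1) ^ 2
        + ∑ x ∈ G.neighborFinset r, ((G.degree x : ℝ) - 1) ^ 3) := by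
  rw [h.spectralMoment_even 2, trace_diagonal_add_ones_cube, card_neighborSet_eq_degree,
    sum_neighborSet fun x => (G.degree x : ℝ) - 1,
    sum_neighborSet fun x => ((G.degree x : ℝ) - 1) ^ 2,
    sum_neighborSet fun x => ((G.degree x : ℝ) - 1) ^ 3]

end IsHeightTwoRoot

end HeightTwo

theorem map_valEmbedding_neighborFinset {n : ℕ} {G : SimpleGraph (Fin n)} [DecidableRel G.Adj]
    {x : Fin n} {s : Finset ℕ} (hs : ∀ a ∈ s, a < n) (h : ∀ y, G.Adj x y ↔ y.val ∈ s) :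
    (G.neighborFinset x).map Fin.valEmbedding = s := by
  have : G.neighborFinset x = s.attachFin hs := by
    ext y
    rw [mem_neighborFinset, h, Finset.mem_attachFin]
  rw [this, Finset.map_valEmbedding_attachFin]

section BTree

variable {p q k l : ℕ}

/-- The number of children of the neighbor `a ∈ {1, …, q}` of the root `0` of `BTree p q k l`. -/
def childCount (p k l a : ℕ) : ℕ :=
  if a = 1 then p - k - l - 1 else if a = 2 then k else if a ≤ l + 2 then 1 else 0

/-- The smallest child of the neighbor `a ∈ {1, …, q}` of the root `0` of `BTree p q k l`; the
children of `a` are consecutive vertices, and the value is irrelevant if there are none. -/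
def firstChild (q k l a : ℕ) : ℕ :=
  if a = 1 then q + k + l + 1 else if a = 2 then q + 1 else q + k + a - 2

theorem BTree_adj_root_iff {r x : Fin (p + q)} (hr : r.val = 0) (hq : 1 ≤ q) :
    (BTree p q k l).Adj r x ↔ x.val ∈ Finset.Icc 1 q := by
  simp only [BTree, fromRel_adj, ne_eq, Fin.ext_iff, Finset.mem_Icc]
  omega

theorem BTree_adj_iff_of_mem_Icc (hl : l + 2 ≤ q) (hkl : k + l + 1 ≤ p) {x y : Fin (p + q)}
    (hx : x.val ∈ Finset.Icc 1 q) :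
    (BTree p q k l).Adj x y ↔
      y.val = 0 ∨
        y.val ∈ Finset.Ico (firstChild q k l x) (firstChild q k l x + childCount p k l x) := by
  rw [Finset.mem_Icc] at hx
  simp only [BTree, fromRel_adj, ne_eq, Fin.ext_iff, firstChild, childCount, Finset.mem_Ico]
  split_ifs <;> omega

theorem isHeightTwoRoot_BTree (hl : l + 2 ≤ q) (hkl : k + l + 1 ≤ p) {r : Fin (p + q)}
    (hr : r.val = 0) : IsHeightTwoRoot (BTree p q k l) r where
  isBipartiteWith := by
    refine ⟨disjoint_compl_right, fun x y hxy => ?_⟩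
    simp only [Set.mem_compl_iff, mem_neighborSet, BTree_adj_root_iff hr (by omega : 1 ≤ q),
      Finset.mem_Icc]
    simp only [BTree, fromRel_adj, ne_eq, Fin.ext_iff] at hxy
    omega
  eq_root_of_adj_of_adj x y z hx hy hxy hxz hyz := by
    rw [BTree_adj_root_iff hr (by omega)] at hx hy
    rw [BTree_adj_iff_of_mem_Icc hl hkl hx] at hxz
    rw [BTree_adj_iff_of_mem_Icc hl hkl hy] at hyz
    rw [ne_eq, Fin.ext_iff] at hxy
    rw [Fin.ext_iff]
    simp only [firstChild, childCount, Finset.mem_Ico, Finset.mem_Icc] at hx hy hxz hyz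
    split_ifs at hxz hyz <;> omega

theorem map_valEmbedding_neighborFinset_BTree_root [DecidableRel (BTree p q k l).Adj]
    {r : Fin (p + q)} (hr : r.val = 0) (hp : 1 ≤ p) (hq : 1 ≤ q) :
    ((BTree p q k l).neighborFinset r).map Fin.valEmbedding = Finset.Icc 1 q :=
  map_valEmbedding_neighborFinset (fun a ha => by rw [Finset.mem_Icc] at ha; omega)
    fun _ => BTree_adj_root_iff hr hq

theorem degree_BTree_root [DecidableRel (BTree p q k l).Adj]
    {r : Fin (p + q)} (hr : r.val = 0) (hp : 1 ≤ p) (hq : 1 ≤ q) :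
    (BTree p q k l).degree r = q := by
  rw [← card_neighborFinset_eq_degree, ← Finset.card_map Fin.valEmbedding,
    map_valEmbedding_neighborFinset_BTree_root hr hp hq, Nat.card_Icc, Nat.add_sub_cancel]

theorem degree_BTree_of_mem_Icc [DecidableRel (BTree p q k l).Adj] (hl : l + 2 ≤ q)
    (hkl : k + l + 1 ≤ p) {x : Fin (p + q)} (hx : x.val ∈ Finset.Icc 1 q) :
    (BTree p q k l).degree x = childCount p k l x + 1 := by
  set f := firstChild q k l x with hf
  set c := childCount p k l x with hc
  have bounds : 1 ≤ f ∧ (c = 0 ∨ f + c ≤ p + q) := by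
    rw [Finset.mem_Icc] at hx
    simp only [hf, hc, firstChild, childCount]
    split_ifs <;> omega
  have neighbors :
      ((BTree p q k l).neighborFinset x).map Fin.valEmbedding =
        insert 0 (Finset.Ico f (f + c)) := by
    refine map_valEmbedding_neighborFinset (fun a ha => ?_) fun y => ?_
    · rw [Finset.mem_insert, Finset.mem_Ico] at ha
      omega
    · rw [Finset.mem_insert, BTree_adj_iff_of_mem_Icc hl hkl hx]
  rw [← card_neighborFinset_eq_degree, ← Finset.card_map Fin.valEmbedding, neighbors,
    Finset.card_insert_of_notMem (by rw [Finset.mem_Ico]; omega), Nat.card_Ico,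
    Nat.add_sub_cancel_left]

theorem sum_childCount {M : Type*} [AddCommMonoid M] (hl : l + 2 ≤ q) (f : ℕ → M) :
    ∑ a ∈ Finset.Icc 1 q, f (childCount p k l a) =
      f (p - k - l - 1) + f k + l • f 1 + (q - l - 2) • f 0 := by
  have one_child : ∑ a ∈ Finset.Ico 3 (l + 3), f (childCount p k l a) = l • f 1 := by
    rw [Finset.sum_congr rfl (g := fun _ => f 1), Finset.sum_const, Nat.card_Ico,
      Nat.add_sub_cancel]
    intro a ha
    rw [Finset.mem_Ico] at ha
    rw [childCount, if_neg (by omega), if_neg (by omega), if_pos (by omega)]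
  have no_child :
      ∑ a ∈ Finset.Ico (l + 3) (q + 1), f (childCount p k l a) = (q - l - 2) • f 0 := by
    rw [Finset.sum_congr rfl (g := fun _ => f 0), Finset.sum_const, Nat.card_Ico,
      show q + 1 - (l + 3) = q - l - 2 by omega]
    intro a ha
    rw [Finset.mem_Ico] at ha
    rw [childCount, if_neg (by omega), if_neg (by omega), if_neg (by omega)]
  rw [← Finset.Ico_succ_right_eq_Icc, Nat.succ_eq_succ, Nat.succ_eq_add_one,
    Finset.sum_eq_sum_Ico_succ_bot (by omega), Finset.sum_eq_sum_Ico_succ_bot (by omega),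
    ← Finset.sum_Ico_consecutive _ (Nat.le_add_left 3 l) (by omega), one_child, no_child,
    ← add_assoc, ← add_assoc]
  simp [childCount]

theorem sum_neighborFinset_BTree_root {M : Type*} [AddCommMonoid M]
    [DecidableRel (BTree p q k l).Adj] (hl : l + 2 ≤ q) (hkl : k + l + 1 ≤ p) {r : Fin (p + q)}
    (hr : r.val = 0) (f : ℕ → M) :
    ∑ x ∈ (BTree p q k l).neighborFinset r, f ((BTree p q k l).degree x) =
      f (p - k - l) + f (k + 1) + l • f 2 + (q - l - 2) • f 1 := by
  calc
    _ = ∑ x ∈ (BTree p q k l).neighborFinset r, f (childCount p k l (Fin.valEmbedding x) + 1) :=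
      Finset.sum_congr rfl fun x hx => by
        rw [mem_neighborFinset, BTree_adj_root_iff hr (by omega)] at hx
        rw [degree_BTree_of_mem_Icc hl hkl hx, Fin.valEmbedding_apply]
    _ = ∑ a ∈ Finset.Icc 1 q, f (childCount p k l a + 1) := by
      rw [← map_valEmbedding_neighborFinset_BTree_root (p := p) (k := k) (l := l) hr (by omega)
        (by omega), Finset.sum_map]
    _ = _ := by
      rw [sum_childCount hl fun c => f (c + 1), Nat.sub_add_cancel (by omega)]

theorem val_swap_zero_one {n : ℕ} (hn : 2 ≤ n) (x : Fin n) :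
    x.val = 0 ∧ (Equiv.swap (⟨0, by omega⟩ : Fin n) ⟨1, by omega⟩ x).val = 1 ∨
      x.val = 1 ∧ (Equiv.swap (⟨0, by omega⟩ : Fin n) ⟨1, by omega⟩ x).val = 0 ∨
      2 ≤ x.val ∧ (Equiv.swap (⟨0, by omega⟩ : Fin n) ⟨1, by omega⟩ x).val = x.val := by
  simp only [Equiv.swap_apply_def, Fin.ext_iff, apply_ite Fin.val]
  split_ifs <;> omega

/-- Exchanging the vertices `0` and `1` identifies `D_{p,q}^{k,l}` with `B_{q,p}^{k,l}`. -/
def DTreeIsoBTree (hp : 1 ≤ p) (hq : 1 ≤ q) : DTree p q k l ≃g BTree q p k l where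
  toEquiv := (Equiv.swap ⟨0, by omega⟩ ⟨1, by omega⟩).trans (finCongr (add_comm p q))
  map_rel_iff' {x y} := by
    have hn : 2 ≤ p + q := by omega
    have hx := val_swap_zero_one hn x
    have hy := val_swap_zero_one hn y
    simp only [BTree, DTree, fromRel_adj, ne_eq, Fin.ext_iff, Equiv.trans_apply,
      finCongr_apply, Fin.val_cast]
    generalize (Equiv.swap _ _ x).val = x' at *
    generalize (Equiv.swap _ _ y).val = y' at *
    refine and_congr (by omega) ?_
    have edges {a b a' b' : ℕ} (ha : a = 0 ∧ a' = 1 ∨ a = 1 ∧ a' = 0 ∨ 2 ≤ a ∧ a' = a)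
        (hb : b = 0 ∧ b' = 1 ∨ b = 1 ∧ b' = 0 ∨ 2 ≤ b ∧ b' = b) :
        (a' = 0 ∧ b' = 1 ↔ b = 0 ∧ a = 1) ∧
        (a' = 0 ∧ 2 ≤ b' ∧ b' ≤ p ↔ a = 1 ∧ 2 ≤ b ∧ b ≤ p) ∧
        (a' = 2 ∧ p + 1 ≤ b' ∧ b' ≤ p + k ↔ a = 2 ∧ p + 1 ≤ b ∧ b ≤ p + k) ∧
        (p + k + 1 ≤ b' ∧ b' ≤ p + k + l ∧ a' = b' - (p + k) + 2 ↔
          p + k + 1 ≤ b ∧ b ≤ p + k + l ∧ a = b - (p + k) + 2) ∧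
        (a' = 1 ∧ p + k + l + 1 ≤ b' ↔ a = 0 ∧ p + k + l + 1 ≤ b) := by
      refine ⟨?_, ?_, ?_, ?_, ?_⟩ <;> omega
    obtain ⟨e₁, e₂, e₃, e₄, e₅⟩ := edges hx hy
    obtain ⟨f₁, f₂, f₃, f₄, f₅⟩ := edges hy hx
    rw [e₁, e₂, e₃, e₄, e₅, f₁, f₂, f₃, f₄, f₅]
    exact Iff.of_eq (by ac_rfl)

theorem sum_degree_sub_one_pow_BTree_root [DecidableRel (BTree p q k l).Adj] (hl : l + 2 ≤ q)
    (hkl : k + l + 1 ≤ p) {r : Fin (p + q)} (hr : r.val = 0) (j : ℕ) :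
    ∑ x ∈ (BTree p q k l).neighborFinset r, (((BTree p q k l).degree x : ℝ) - 1) ^ (j + 1) =
      ((p : ℝ) - k - l - 1) ^ (j + 1) + (k : ℝ) ^ (j + 1) + l := by
  have natCast_sub : ((p - k - l : ℕ) : ℝ) = p - k - l := by
    rw [Nat.cast_sub (by omega), Nat.cast_sub (by omega)]
  rw [sum_neighborFinset_BTree_root hl hkl hr fun d => ((d : ℝ) - 1) ^ (j + 1), natCast_sub]
  norm_num

theorem spectralMoment_BTree_odd (hl : l + 2 ≤ q) (hkl : k + l + 1 ≤ p) (i : ℕ) :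
    spectralMoment (BTree p q k l) (2 * i + 1) = 0 :=
  spectralMoment_odd_of_isBipartiteWith
    (isHeightTwoRoot_BTree hl hkl (r := ⟨0, by omega⟩) rfl).isBipartiteWith i

theorem spectralMoment_BTree_two (hl : l + 2 ≤ q) (hkl : k + l + 1 ≤ p) :
    spectralMoment (BTree p q k l) 2 = 2 * (p + q - 1) := by
  classical
  set r : Fin (p + q) := ⟨0, by omega⟩
  have sum_pow_one := sum_degree_sub_one_pow_BTree_root hl hkl (r := r) rfl 0
  simp only [zero_add, pow_one] at sum_pow_one
  rw [(isHeightTwoRoot_BTree hl hkl (r := r) rfl).spectralMoment_two,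
    degree_BTree_root rfl (by omega) (by omega), sum_pow_one]
  ring

theorem spectralMoment_BTree_four (hl : l + 2 ≤ q) (hkl : k + l + 1 ≤ p) :
    spectralMoment (BTree p q k l) 4 =
      2 * ((q : ℝ) ^ 2 + 2 * (p - 1) + (((p : ℝ) - k - l - 1) ^ 2 + (k : ℝ) ^ 2 + l)) := by
  classical
  set r : Fin (p + q) := ⟨0, by omega⟩
  have sum_pow := sum_degree_sub_one_pow_BTree_root hl hkl (r := r) rfl
  have sum_pow_one := sum_pow 0
  simp only [zero_add, pow_one] at sum_pow_one
  rw [(isHeightTwoRoot_BTree hl hkl (r := r) rfl).spectralMoment_four,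
    degree_BTree_root rfl (by omega) (by omega), sum_pow_one, sum_pow 1]
  ring

theorem spectralMoment_BTree_six (hl : l + 2 ≤ q) (hkl : k + l + 1 ≤ p) :
    spectralMoment (BTree p q k l) 6 =
      2 * ((q : ℝ) ^ 3 + 3 * (q * (p - 1)) + 3 * (((p : ℝ) - k - l - 1) ^ 2 + (k : ℝ) ^ 2 + l)
        + (((p : ℝ) - k - l - 1) ^ 3 + (k : ℝ) ^ 3 + l)) := by
  classical
  set r : Fin (p + q) := ⟨0, by omega⟩
  have sum_pow := sum_degree_sub_one_pow_BTree_root hl hkl (r := r) rfl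
  have sum_pow_one := sum_pow 0
  simp only [zero_add, pow_one] at sum_pow_one
  rw [(isHeightTwoRoot_BTree hl hkl (r := r) rfl).spectralMoment_six,
    degree_BTree_root rfl (by omega) (by omega), sum_pow_one, sum_pow 1, sum_pow 2]
  ring

theorem spectralMoment_DTree (hp : 1 ≤ p) (hq : 1 ≤ q) (i : ℕ) :
    spectralMoment (DTree p q k l) i = spectralMoment (BTree q p k l) i :=
  spectralMoment_eq_of_iso (DTreeIsoBTree hp hq) i

theorem spectralMoment_DTree_odd (hl : l + 2 ≤ p) (hkl : k + l + 1 ≤ q) (i : ℕ) :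
    spectralMoment (DTree p q k l) (2 * i + 1) = 0 := by
  rw [spectralMoment_DTree (by omega) (by omega), spectralMoment_BTree_odd hl hkl]

theorem spectralMoment_DTree_eq_BTree_of_lt_four {k' l' : ℕ} (hl : l + 2 ≤ p)
    (hkl : k + l + 1 ≤ q) (hl' : l' + 2 ≤ q) (hkl' : k' + l' + 1 ≤ p) :
    ∀ i < 4, spectralMoment (DTree p q k l) i = spectralMoment (BTree p q k' l') i := by
  intro i hi
  interval_cases i
  · rw [spectralMoment_zero, spectralMoment_zero]
  · exact (spectralMoment_DTree_odd hl hkl 0).trans (spectralMoment_BTree_odd hl' hkl' 0).symm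
  · rw [spectralMoment_DTree (by omega) (by omega), spectralMoment_BTree_two hl hkl,
      spectralMoment_BTree_two hl' hkl', add_comm (q : ℝ)]
  · exact (spectralMoment_DTree_odd hl hkl 1).trans (spectralMoment_BTree_odd hl' hkl' 1).symm

theorem spectralMoment_four_DTree_sub_BTree (hp : 3 ≤ p) (hq : 4 ≤ q) :
    spectralMoment (DTree p q 0 1) 4 - spectralMoment (BTree p q 0 2) 4 =
      4 * (2 * (p : ℝ) - q - 3) := by
  rw [spectralMoment_DTree (by omega) (by omega), spectralMoment_BTree_four hp (by omega),
    spectralMoment_BTree_four hq hp]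
  push_cast
  ring

theorem spectralMoment_DTree_eq_BTree_of_lt_six (hp : 3 ≤ p) (hq : 4 ≤ q) (h : 2 * p = q + 3) :
    ∀ i < 6, spectralMoment (DTree p q 0 1) i = spectralMoment (BTree p q 0 2) i := by
  intro i hi
  obtain hi | rfl | rfl : i < 4 ∨ i = 4 ∨ i = 5 := by omega
  · exact spectralMoment_DTree_eq_BTree_of_lt_four hp (by omega) hq hp i hi
  · have hcast : 2 * (p : ℝ) = q + 3 := by exact_mod_cast h
    linarith [spectralMoment_four_DTree_sub_BTree hp hq]
  · exact (spectralMoment_DTree_odd hp (by omega) 2).trans (spectralMoment_BTree_odd hq hp 2).symm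

theorem spectralMoment_six_BTree_sub_DTree (hp : 3 ≤ p) (hq : 4 ≤ q) (h : 2 * p = q + 3) :
    spectralMoment (BTree p q 0 2) 6 - spectralMoment (DTree p q 0 1) 6 =
      3 * (((q : ℝ) - 2) ^ 2 - 1) := by
  have hq_cast : (q : ℝ) = 2 * p - 3 := by
    rw [eq_sub_iff_add_eq]
    exact_mod_cast h.symm
  rw [spectralMoment_DTree (by omega) (by omega), spectralMoment_BTree_six hp (by omega),
    spectralMoment_BTree_six hq hp, hq_cast]
  push_cast
  ring

theorem spectralMoment_six_DTree_lt_BTree (hp : 3 ≤ p) (hq : 4 ≤ q) (h : 2 * p = q + 3) :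
    spectralMoment (DTree p q 0 1) 6 < spectralMoment (BTree p q 0 2) 6 := by
  have hq_cast : (4 : ℝ) ≤ q := by exact_mod_cast hq
  nlinarith [spectralMoment_six_BTree_sub_DTree hp hq h]

end BTree

theorem stmt_19_general (p q : ℕ) (hp : 3 ≤ p) (hq : 4 ≤ q) :
    (∀ i < 4, spectralMoment (DTree p q 0 1) i = spectralMoment (BTree p q 0 2) i) ∧
    spectralMoment (DTree p q 0 1) 4 - spectralMoment (BTree p q 0 2) 4
      = 4 * (2 * (p : ℝ) - (q : ℝ) - 3) ∧
    (q + 3 < 2 * p → SLt (BTree p q 0 2) (DTree p q 0 1)) ∧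
    (2 * p < q + 3 → SLt (DTree p q 0 1) (BTree p q 0 2)) ∧
    (2 * p = q + 3 →
      (∀ i < 6, spectralMoment (DTree p q 0 1) i = spectralMoment (BTree p q 0 2) i) ∧
      spectralMoment (BTree p q 0 2) 6 - spectralMoment (DTree p q 0 1) 6
        = 3 * (((q : ℝ) - 2) ^ 2 - 1) ∧
      0 < spectralMoment (BTree p q 0 2) 6 - spectralMoment (DTree p q 0 1) 6 ∧
      SLt (DTree p q 0 1) (BTree p q 0 2)) := by
  have eq_of_lt_four :=
    spectralMoment_DTree_eq_BTree_of_lt_four (k := 0) (k' := 0) hp (by omega) hq hp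
  have four_sub := spectralMoment_four_DTree_sub_BTree hp hq
  refine ⟨eq_of_lt_four, four_sub, fun h => ?_, fun h => ?_, fun h => ?_⟩
  · have hcast : (q : ℝ) + 3 < 2 * p := by exact_mod_cast h
    exact ⟨4, by norm_num, by rw [Fintype.card_fin]; omega,
      fun i hi => (eq_of_lt_four i hi).symm, by linarith⟩
  · have hcast : 2 * (p : ℝ) < q + 3 := by exact_mod_cast h
    exact ⟨4, by norm_num, by rw [Fintype.card_fin]; omega, eq_of_lt_four, by linarith⟩
  · have eq_of_lt_six := spectralMoment_DTree_eq_BTree_of_lt_six hp hq h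
    have six_lt := spectralMoment_six_DTree_lt_BTree hp hq h
    exact ⟨eq_of_lt_six, spectralMoment_six_BTree_sub_DTree hp hq h, sub_pos.2 six_lt,
      6, by norm_num, by rw [Fintype.card_fin]; omega, eq_of_lt_six, six_lt⟩

/-- For `4 ≤ p < q` and `n = p + q`:
`S_i(D_{p,q}^{0,1}) = S_i(B_{p,q}^{0,2})` for `i = 0,1,2,3` and
`S_4(D_{p,q}^{0,1}) - S_4(B_{p,q}^{0,2}) = 4(2p - q - 3)`. Consequently:
if `2p > q + 3` then `B_{p,q}^{0,2} ≺_s D_{p,q}^{0,1}`; if `2p < q + 3` then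
`D_{p,q}^{0,1} ≺_s B_{p,q}^{0,2}`; and if `2p = q + 3` then
`S_i(D_{p,q}^{0,1}) = S_i(B_{p,q}^{0,2})` for `i = 0,…,5` while
`S_6(B_{p,q}^{0,2}) - S_6(D_{p,q}^{0,1}) = 3((q - 2)² - 1) > 0`, so again
`D_{p,q}^{0,1} ≺_s B_{p,q}^{0,2}`. -/
theorem stmt_19 (p q : ℕ) (hp : 4 ≤ p) (hpq : p < q) :
    (∀ i < 4, spectralMoment (DTree p q 0 1) i = spectralMoment (BTree p q 0 2) i) ∧
    spectralMoment (DTree p q 0 1) 4 - spectralMoment (BTree p q 0 2) 4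
      = 4 * (2 * (p : ℝ) - (q : ℝ) - 3) ∧
    (q + 3 < 2 * p → SLt (BTree p q 0 2) (DTree p q 0 1)) ∧
    (2 * p < q + 3 → SLt (DTree p q 0 1) (BTree p q 0 2)) ∧
    (2 * p = q + 3 →
      (∀ i < 6, spectralMoment (DTree p q 0 1) i = spectralMoment (BTree p q 0 2) i) ∧
      spectralMoment (BTree p q 0 2) 6 - spectralMoment (DTree p q 0 1) 6
        = 3 * (((q : ℝ) - 2) ^ 2 - 1) ∧
      0 < spectralMoment (BTree p q 0 2) 6 - spectralMoment (DTree p q 0 1) 6 ∧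
      SLt (DTree p q 0 1) (BTree p q 0 2)) :=
  stmt_19_general p q (by omega) (by omega)
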